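/- Let G be a simple graph on a finite vertex set V, let v₀ ∈ V, and suppose V = A ∪ B with A ∩ B = {v₀}, |A| = n₁ ≥ 1, |B| = n₂ ≥ 1, such that every edge of G lies entirely within A or entirely within B (so G is the wedge sum G[A] ∨ G[B] at v₀). Then β_G(x) = (1+x)^{n₁−1}·β_{G[B]}(x) + (1+x)^{n₂−1}·β_{G[A]}(x) − (1+x)^{n₁+n₂−2} as polynomials with integer coefficients. -/

import Mathlib

open Polynomial

/-- `islandF G S` is the quantity `f_G(S) = 2·c_G(S) + e_G(S) − |S|`, where `c_G(S)`
and `e_G(S)` are the numbers of connected components and edges of the induced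
subgraph `G[S]`.  For a planar graph it equals the total number of faces of a
planar embedding of `G[S]`, summed over connected components. -/
noncomputable def islandF {V : Type*} [Fintype V] [DecidableEq V]
    (G : SimpleGraph V) (S : Finset V) : ℤ :=
  2 * Nat.card ((G.induce (S : Set V)).ConnectedComponent)
    + Nat.card ((G.induce (S : Set V)).edgeSet) - S.card

/-- The total island boundary polynomial `β_G(x) = Σ_{∅ ≠ S ⊆ V} f_G(S)·x^{|S|−1}`. -/
noncomputable def islandPoly {V : Type*} [Fintype V] [DecidableEq V]
    (G : SimpleGraph V) : Polynomial ℤ :=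
  ∑ S ∈ Finset.univ.powerset.filter (fun S : Finset V => S.Nonempty),
    Polynomial.C (islandF G S) * Polynomial.X ^ (S.card - 1)

/-- Components of `G[S]` not containing `v₀`. -/
abbrev NB {V : Type*} (G : SimpleGraph V) (v₀ : V) (S : Set V) : Type _ :=
  {C : (G.induce S).ConnectedComponent //
    ∀ z : S, (G.induce S).connectedComponentMk z = C → z.1 ≠ v₀}

lemma card_cc_eq {V : Type*} [Finite V] [DecidableEq V] (G : SimpleGraph V) (v₀ : V)
    (S : Finset V) :
    Nat.card (G.induce (S : Set V)).ConnectedComponent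
      = Nat.card (NB G v₀ (S : Set V)) + (S ∩ {v₀}).card := by
  classical
  by_cases h : v₀ ∈ S
  · have h1 : (S ∩ {v₀}).card = 1 := by
      rw [Finset.inter_singleton_of_mem h]; simp
    rw [h1, ← Finite.card_option]
    let c₀ := (G.induce (S : Set V)).connectedComponentMk ⟨v₀, h⟩
    have e : NB G v₀ (S : Set V) ≃ {C // C ≠ c₀} := by
      refine Equiv.subtypeEquivRight ?_
      intro C
      constructor
      · intro hC hc
        exact hC ⟨v₀, h⟩ hc.symm rfl
      · rintro hC z rfl hz
        apply hC
        have : z = ⟨v₀, h⟩ := Subtype.ext hz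
        rw [this]
    exact Nat.card_congr ((Equiv.optionSubtypeNe c₀).symm.trans (Equiv.optionCongr e.symm))
  · have h1 : (S ∩ {v₀}).card = 0 := by
      rw [Finset.inter_singleton_of_notMem h]; simp
    rw [h1, add_zero]
    refine Nat.card_congr (Equiv.subtypeUnivEquiv ?_).symm
    rintro C z - hz
    exact h (hz ▸ z.2)

lemma reach_stay {V : Type*} (G : SimpleGraph V) (v₀ : V) (S P : Set V) (hPS : P ⊆ S)
    (hcl : ∀ a b, a ∈ P → a ≠ v₀ → b ∈ S → G.Adj a b → b ∈ P)
    (x : P) (hx : ∀ z : P, (G.induce P).Reachable x z → z.1 ≠ v₀) (y : S)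
    (h : (G.induce S).Reachable ⟨x.1, hPS x.2⟩ y) :
    ∃ hy : y.1 ∈ P, (G.induce P).Reachable x ⟨y.1, hy⟩ := by
  rw [SimpleGraph.reachable_iff_reflTransGen] at h
  induction h with
  | refl => exact ⟨x.2, SimpleGraph.Reachable.refl _⟩
  | @tail b c _ hbc ih =>
    obtain ⟨hb, hr⟩ := ih
    have hadj : G.Adj b.1 c.1 := hbc
    have hc := hcl _ _ hb (hx _ hr) c.2 hadj
    refine ⟨hc, hr.trans (SimpleGraph.Adj.reachable ?_)⟩
    exact hadj

/-- The map on components avoiding `v₀`. -/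
def NB.incl {V : Type*} (G : SimpleGraph V) (v₀ : V) (S P : Set V) (hPS : P ⊆ S)
    (hcl : ∀ a b, a ∈ P → a ≠ v₀ → b ∈ S → G.Adj a b → b ∈ P) (C : NB G v₀ P) : NB G v₀ S :=
  ⟨C.1.map (SimpleGraph.induceHomOfLE G hPS).toHom, by
    obtain ⟨C, hC⟩ := C
    induction C using SimpleGraph.ConnectedComponent.ind with
    | _ x =>
      intro z hz
      have hz' : (G.induce S).Reachable ⟨x.1, hPS x.2⟩ z :=
        (SimpleGraph.ConnectedComponent.exact hz).symm
      obtain ⟨hy, hr⟩ := reach_stay G v₀ S P hPS hcl x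
        (fun w hw => hC w (SimpleGraph.ConnectedComponent.sound hw.symm)) z hz'
      exact hC ⟨z.1, hy⟩ (SimpleGraph.ConnectedComponent.sound hr.symm)⟩

lemma NB.exists_rep {V : Type*} (G : SimpleGraph V) (v₀ : V) (P : Set V) (C : NB G v₀ P) :
    ∃ x : P, (G.induce P).connectedComponentMk x = C.1 ∧
      ∀ z : P, (G.induce P).Reachable x z → z.1 ≠ v₀ := by
  obtain ⟨C, hC⟩ := C
  induction C using SimpleGraph.ConnectedComponent.ind with
  | _ x =>
    exact ⟨x, rfl, fun w hw => hC w (SimpleGraph.ConnectedComponent.sound hw.symm)⟩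

lemma NB.incl_eq {V : Type*} (G : SimpleGraph V) (v₀ : V) (S P : Set V) (hPS : P ⊆ S)
    (hcl : ∀ a b, a ∈ P → a ≠ v₀ → b ∈ S → G.Adj a b → b ∈ P) (C : NB G v₀ P) (x : P)
    (hx : (G.induce P).connectedComponentMk x = C.1) :
    (NB.incl G v₀ S P hPS hcl C).1 = (G.induce S).connectedComponentMk ⟨x.1, hPS x.2⟩ := by
  unfold NB.incl
  simp only [← hx]
  rfl

lemma NB.incl_inj {V : Type*} (G : SimpleGraph V) (v₀ : V) (S P : Set V) (hPS : P ⊆ S)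
    (hcl : ∀ a b, a ∈ P → a ≠ v₀ → b ∈ S → G.Adj a b → b ∈ P) :
    Function.Injective (NB.incl G v₀ S P hPS hcl) := by
  intro C D h
  obtain ⟨x, hx, hx'⟩ := C.exists_rep
  obtain ⟨y, hy, hy'⟩ := D.exists_rep
  have h1 := congrArg Subtype.val h
  rw [NB.incl_eq G v₀ S P hPS hcl C x hx, NB.incl_eq G v₀ S P hPS hcl D y hy] at h1
  obtain ⟨_, hr⟩ := reach_stay G v₀ S P hPS hcl x hx' _ (SimpleGraph.ConnectedComponent.exact h1)
  apply Subtype.ext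
  rw [← hx, ← hy]
  exact SimpleGraph.ConnectedComponent.sound hr

lemma NB.incl_surj {V : Type*} (G : SimpleGraph V) (v₀ : V) (S P : Set V) (hPS : P ⊆ S)
    (hcl : ∀ a b, a ∈ P → a ≠ v₀ → b ∈ S → G.Adj a b → b ∈ P) (D : NB G v₀ S) (x : S)
    (hx : (G.induce S).connectedComponentMk x = D.1) (hxP : x.1 ∈ P) :
    ∃ C, NB.incl G v₀ S P hPS hcl C = D := by
  refine ⟨⟨(G.induce P).connectedComponentMk ⟨x.1, hxP⟩, ?_⟩, ?_⟩
  · intro z hz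
    refine D.2 ⟨z.1, hPS z.2⟩ ?_
    rw [← hx]
    have := (SimpleGraph.ConnectedComponent.exact hz).map
      (SimpleGraph.induceHomOfLE G hPS).toHom
    exact SimpleGraph.ConnectedComponent.sound this
  · apply Subtype.ext
    rw [NB.incl_eq G v₀ S P hPS hcl _ ⟨x.1, hxP⟩ rfl, ← hx]

lemma card_NB_add {V : Type*} [Finite V] (G : SimpleGraph V) (v₀ : V) (S P Q : Set V)
    (hPS : P ⊆ S) (hQS : Q ⊆ S) (hS : ∀ x ∈ S, x ∈ P ∨ x ∈ Q)
    (hPQ : ∀ x, x ∈ P → x ∈ Q → x = v₀)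
    (hclP : ∀ a b, a ∈ P → a ≠ v₀ → b ∈ S → G.Adj a b → b ∈ P)
    (hclQ : ∀ a b, a ∈ Q → a ≠ v₀ → b ∈ S → G.Adj a b → b ∈ Q) :
    Nat.card (NB G v₀ S) = Nat.card (NB G v₀ P) + Nat.card (NB G v₀ Q) := by
  have : Finite (NB G v₀ P) := Subtype.finite
  have : Finite (NB G v₀ Q) := Subtype.finite
  rw [← Nat.card_sum]
  symm
  refine Nat.card_congr (Equiv.ofBijective
    (Sum.elim (NB.incl G v₀ S P hPS hclP) (NB.incl G v₀ S Q hQS hclQ)) ⟨?_, ?_⟩)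
  · refine Function.Injective.sumElim (NB.incl_inj ..) (NB.incl_inj ..) ?_
    intro C D h
    obtain ⟨x, hx, hx'⟩ := C.exists_rep
    obtain ⟨y, hy, hy'⟩ := D.exists_rep
    have h1 := congrArg Subtype.val h
    rw [NB.incl_eq G v₀ S P hPS hclP C x hx, NB.incl_eq G v₀ S Q hQS hclQ D y hy] at h1
    obtain ⟨hyP, _⟩ := reach_stay G v₀ S P hPS hclP x hx' _
      (SimpleGraph.ConnectedComponent.exact h1)
    exact hy' y (SimpleGraph.Reachable.refl _) (hPQ _ hyP y.2)
  · intro D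
    obtain ⟨x, hx, -⟩ := D.exists_rep
    rcases hS x.1 x.2 with h | h
    · obtain ⟨C, hC⟩ := NB.incl_surj G v₀ S P hPS hclP D x hx h
      exact ⟨Sum.inl C, hC⟩
    · obtain ⟨C, hC⟩ := NB.incl_surj G v₀ S Q hQS hclQ D x hx h
      exact ⟨Sum.inr C, hC⟩

lemma card_edges {V : Type*} (G : SimpleGraph V) (S : Set V) :
    Nat.card (G.induce S).edgeSet = {e | e ∈ G.edgeSet ∧ ∀ v ∈ e, v ∈ S}.ncard := by
  have hinj : Function.Injective (Sym2.map (Subtype.val : S → V)) :=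
    Sym2.map.injective Subtype.val_injective
  rw [← Nat.card_image_of_injective hinj, Nat.card_coe_set_eq]
  congr 1
  ext e
  induction e using Sym2.ind with
  | _ a b =>
    constructor
    · rintro ⟨e, he, h⟩
      induction e using Sym2.ind with
      | _ c d =>
        rw [← h]
        refine ⟨he, ?_⟩
        intro v hv
        simp only [Sym2.map_mk, Sym2.mem_iff] at hv
        rcases hv with rfl | rfl
        · exact c.2
        · exact d.2
    · rintro ⟨h, hv⟩
      exact ⟨s(⟨a, hv a (by simp)⟩, ⟨b, hv b (by simp)⟩), h, rfl⟩

lemma islandF_split {V : Type*} [Fintype V] [DecidableEq V]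
    (G : SimpleGraph V) (v₀ : V) (A B : Finset V)
    (hinter : A ∩ B = {v₀}) (hcover : A ∪ B = Finset.univ)
    (hedge : ∀ a b : V, G.Adj a b → (a ∈ A ∧ b ∈ A) ∨ (a ∈ B ∧ b ∈ B)) (S : Finset V) :
    islandF G S = islandF G (S ∩ A) + islandF G (S ∩ B) - (S ∩ {v₀}).card := by
  have hAB : ∀ x, x ∈ A → x ∈ B → x = v₀ := fun x ha hb => by
    have : x ∈ A ∩ B := Finset.mem_inter.2 ⟨ha, hb⟩
    rw [hinter] at this
    simpa using this
  have hc : ∀ x, x ∈ A ∨ x ∈ B := fun x => by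
    have : x ∈ A ∪ B := by rw [hcover]; simp
    simpa using this
  have hv : v₀ ∈ A ∩ B := by rw [hinter]; simp
  rw [Finset.mem_inter] at hv
  have hcard : S.card + (S ∩ {v₀}).card = (S ∩ A).card + (S ∩ B).card := by
    rw [← Finset.card_union_add_card_inter (S ∩ A) (S ∩ B), ← Finset.inter_union_distrib_left,
      hcover, ← Finset.inter_inter_distrib_left, hinter, Finset.inter_univ]
  have hcc := card_NB_add G v₀ (S : Set V) ((S ∩ A : Finset V) : Set V)
    ((S ∩ B : Finset V) : Set V) (by simp) (by simp)
    (by intro x hx; have := hc x; simp at hx ⊢; tauto)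
    (by intro x hx hy; simp at hx hy; exact hAB x hx.2 hy.2)
    (by
      intro a b ha hne hb hadj
      have := hedge a b hadj
      have := hAB a
      simp at ha hb ⊢
      tauto)
    (by
      intro a b ha hne hb hadj
      have := hedge a b hadj
      have := hAB a
      simp at ha hb ⊢
      tauto)
  have hA : S ∩ A ∩ {v₀} = S ∩ {v₀} := by
    ext x; simp; rintro _ rfl; exact hv.1
  have hB : S ∩ B ∩ {v₀} = S ∩ {v₀} := by
    ext x; simp; rintro _ rfl; exact hv.2
  have h1 := card_cc_eq G v₀ S
  have h2 := card_cc_eq G v₀ (S ∩ A)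
  have h3 := card_cc_eq G v₀ (S ∩ B)
  rw [hA] at h2
  rw [hB] at h3
  have he : Nat.card (G.induce (S : Set V)).edgeSet
      = Nat.card (G.induce ((S ∩ A : Finset V) : Set V)).edgeSet
        + Nat.card (G.induce ((S ∩ B : Finset V) : Set V)).edgeSet := by
    rw [card_edges, card_edges, card_edges, ← Set.ncard_union_eq]
    · congr 1
      ext e
      induction e using Sym2.ind with
      | _ a b =>
        have := hedge a b
        simp
        tauto
    · rw [Set.disjoint_left]
      intro e
      induction e using Sym2.ind with
      | _ a b =>
        simp
        intro hadj _ haA _ hbA _ _ haB _ hbB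
        have := hAB a haA haB
        have := hAB b hbA hbB
        exact hadj.ne (by simp_all)
  unfold islandF
  rw [he]
  push_cast
  omega

lemma sum_inter {V : Type*} [Fintype V] [DecidableEq V] (h : Finset V → ℤ) (A : Finset V) :
    ∑ S : Finset V, (C (h (S ∩ A)) * X ^ S.card : ℤ[X])
      = (1 + X) ^ (Aᶜ.card) * ∑ T ∈ A.powerset, C (h T) * X ^ T.card := by
  have h1 : ((1 + X) ^ (Aᶜ.card) : ℤ[X]) = ∑ U ∈ Aᶜ.powerset, X ^ U.card := by
    rw [add_comm, ← Finset.sum_pow_mul_eq_add_pow]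
    simp
  rw [h1, Finset.sum_mul_sum, ← Finset.sum_product']
  refine Finset.sum_bij' (fun S _ => (S ∩ Aᶜ, S ∩ A)) (fun p _ => p.1 ∪ p.2) ?_ ?_ ?_ ?_ ?_
  · intro S _; simp
  · intro p _; simp
  · intro S _
    ext x; simp; tauto
  · rintro ⟨U, T⟩ hp
    simp only [Finset.mem_product, Finset.mem_powerset, Finset.subset_iff,
      Finset.mem_compl] at hp
    obtain ⟨hp1, hp2⟩ := hp
    ext x
    · have := @hp1 x; have := @hp2 x; simp; tauto
    · have := @hp1 x; have := @hp2 x; simp; tauto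
  · intro S _
    have : S.card = (S ∩ Aᶜ).card + (S ∩ A).card := by
      rw [← Finset.card_union_of_disjoint]
      · congr 1; ext x; simp; tauto
      · rw [Finset.disjoint_left]; intro x; simp; tauto
    simp only
    rw [this, pow_add]
    ring

lemma islandF_empty {V : Type*} [Fintype V] [DecidableEq V] (G : SimpleGraph V) :
    islandF G ∅ = 0 := by
  have : IsEmpty ((∅ : Finset V) : Set V) := by simp
  have : IsEmpty (G.induce ((∅ : Finset V) : Set V)).ConnectedComponent :=
    ⟨fun C => C.ind (fun x => isEmptyElim x)⟩
  have : IsEmpty (G.induce ((∅ : Finset V) : Set V)).edgeSet :=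
    ⟨fun e => by
      obtain ⟨e, he⟩ := e
      induction e using Sym2.ind with
      | _ a b => exact isEmptyElim a⟩
  simp [islandF]

lemma X_mul_islandPoly {V : Type*} [Fintype V] [DecidableEq V] (G : SimpleGraph V) :
    X * islandPoly G = ∑ S : Finset V, C (islandF G S) * X ^ S.card := by
  unfold islandPoly
  rw [Finset.powerset_univ, Finset.mul_sum, Finset.sum_filter]
  refine Finset.sum_congr rfl ?_
  intro S _
  split_ifs with h
  · have : S.card = (S.card - 1) + 1 := by have := h.card_pos; omega
    conv_rhs => rw [this, pow_succ]
    ring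
  · rw [Finset.not_nonempty_iff_eq_empty] at h
    subst h
    simp [islandF_empty]

lemma islandF_iso {V W : Type*} [Fintype V] [DecidableEq V] [Fintype W] [DecidableEq W]
    (G : SimpleGraph V) (H : SimpleGraph W) (f : H ↪g G) (S : Finset W) :
    islandF H S = islandF G (S.map f.toEmbedding) := by
  let e : H.induce (S : Set W) ≃g G.induce ((S.map f.toEmbedding : Finset V) : Set V) :=
    { toEquiv := Equiv.ofBijective
        (fun x => ⟨f x.1, by simpa using x.2⟩) ⟨by
          intro x y h
          exact Subtype.ext (f.injective (congrArg Subtype.val h)), by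
          rintro ⟨y, hy⟩
          simp at hy
          obtain ⟨x, hx, rfl⟩ := hy
          exact ⟨⟨x, hx⟩, rfl⟩⟩
      map_rel_iff' := by
        intro a b
        simp }
  unfold islandF
  rw [Nat.card_congr e.connectedComponentEquiv, Nat.card_congr e.mapEdgeSet, Finset.card_map]

lemma X_mul_islandPoly_induce {V : Type*} [Fintype V] [DecidableEq V] (G : SimpleGraph V)
    (A : Finset V) :
    X * islandPoly (G.induce (A : Set V))
      = ∑ T ∈ A.powerset, C (islandF G T) * X ^ T.card := by
  rw [X_mul_islandPoly]
  refine Finset.sum_bij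
    (fun S _ => S.map (SimpleGraph.Embedding.induce (G := G) (A : Set V)).toEmbedding)
    ?_ ?_ ?_ ?_
  · intro S _
    rw [Finset.mem_powerset]
    intro x hx
    rw [Finset.mem_map] at hx
    obtain ⟨y, _, rfl⟩ := hx
    exact y.2
  · intro S _ T _ h
    exact Finset.map_injective _ h
  · intro T hT
    rw [Finset.mem_powerset] at hT
    refine ⟨Finset.univ.filter (fun x => x.1 ∈ T), Finset.mem_univ _, ?_⟩
    ext x
    rw [Finset.mem_map]
    constructor
    · rintro ⟨y, hy, rfl⟩
      exact (Finset.mem_filter.1 hy).2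
    · intro hx
      exact ⟨⟨x, hT hx⟩, by simpa using hx, rfl⟩
  · intro S _
    rw [Finset.card_map, islandF_iso G _ (SimpleGraph.Embedding.induce (G := G) (A : Set V))]



theorem islandPoly_wedge {V : Type*} [Fintype V] [DecidableEq V]
    (G : SimpleGraph V) (v₀ : V) (A B : Finset V)
    (hinter : A ∩ B = {v₀}) (hcover : A ∪ B = Finset.univ)
    (h₁ : 1 ≤ A.card) (h₂ : 1 ≤ B.card)
    (hedge : ∀ a b : V, G.Adj a b → (a ∈ A ∧ b ∈ A) ∨ (a ∈ B ∧ b ∈ B)) :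
    islandPoly G
      = (1 + Polynomial.X) ^ (A.card - 1) * islandPoly (G.induce (B : Set V))
        + (1 + Polynomial.X) ^ (B.card - 1) * islandPoly (G.induce (A : Set V))
        - (1 + Polynomial.X) ^ (A.card + B.card - 2) := by
  have hn : A.card + B.card = Fintype.card V + 1 := by
    rw [← Finset.card_union_add_card_inter, hinter, hcover]
    simp
  have hA : Aᶜ.card = B.card - 1 := by rw [Finset.card_compl]; omega
  have hB : Bᶜ.card = A.card - 1 := by rw [Finset.card_compl]; omega
  have hv : ({v₀} : Finset V)ᶜ.card = A.card + B.card - 2 := by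
    rw [Finset.card_compl, Finset.card_singleton]; omega
  have hs : ∑ T ∈ ({v₀} : Finset V).powerset, (C ((T.card : ℤ)) * X ^ T.card : ℤ[X]) = X := by
    have : ({v₀} : Finset V) = insert v₀ ∅ := rfl
    rw [this, Finset.sum_powerset_insert (by simp)]
    simp
  have key : X * islandPoly G = X * ((1 + Polynomial.X) ^ (A.card - 1) *
        islandPoly (G.induce (B : Set V))
        + (1 + Polynomial.X) ^ (B.card - 1) * islandPoly (G.induce (A : Set V))
        - (1 + Polynomial.X) ^ (A.card + B.card - 2)) := by
    have e1 := sum_inter (islandF G) A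
    have e2 := sum_inter (islandF G) B
    have e3 := sum_inter (fun T => (T.card : ℤ)) {v₀}
    rw [hs, hv] at e3
    rw [← X_mul_islandPoly_induce, hA] at e1
    rw [← X_mul_islandPoly_induce, hB] at e2
    have e0 : X * islandPoly G = ∑ S : Finset V, (C (islandF G (S ∩ A)) * X ^ S.card : ℤ[X])
        + ∑ S : Finset V, (C (islandF G (S ∩ B)) * X ^ S.card : ℤ[X])
        - ∑ S : Finset V, (C (((S ∩ {v₀}).card : ℤ)) * X ^ S.card : ℤ[X]) := by
      rw [X_mul_islandPoly, ← Finset.sum_add_distrib, ← Finset.sum_sub_distrib]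
      refine Finset.sum_congr rfl fun S _ => ?_
      rw [islandF_split G v₀ A B hinter hcover hedge S, C_sub, C_add]
      ring
    rw [e0, e1, e2, e3]
    ring
  exact mul_left_cancel₀ X_ne_zero key
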